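/- Every path from a measurement event to the output of a data flow graph has a tamper-permitting local prefix: let D = C(t,p,φ,e) be the data flow semantics of a Copland phrase, let v be a measurement event of D with v ≠ ⊤(D), and let π be a path of D from v to ⊤(D). Then π has a prefix of length greater than 1 that is local to some place and permits tampering. -/

import Mathlib

namespace Copland

/-- Places are drawn from a countable set. -/
abbrev Place := ℕ
/-- Symbols (measurement/target identifiers) are drawn from a countable set. -/
abbrev Symb := ℕ

/-- Splitting specifications: `+` or `-`. -/
inductive Split where
  | plus
  | minus
deriving DecidableEq, Repr

/-- Copland phrases. -/
inductive Phrase where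
  | meas : Symb → Place → Symb → Phrase          -- measurement  m q s
  | att  : Place → Phrase → Phrase               -- @_q [ t ]
  | copy : Phrase                                 -- _
  | sign : Phrase                                 -- !
  | hash : Phrase                                 -- #
  | lseq : Phrase → Phrase → Phrase               -- t1 → t2
  | bseq : Split → Split → Phrase → Phrase → Phrase  -- t1 d1<d2 t2
  | bpar : Split → Split → Phrase → Phrase → Phrase  -- t1 d1~d2 t2
deriving DecidableEq, Repr

/-- Evidence terms. -/
inductive Evidence where
  | empty : Evidence                                          -- ξ
  | meas : Symb → Place → Symb → Place → List ℕ → Evidence → Evidence  -- m(ms(m,q,s),p,φ,e)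
  | sig  : Evidence → Place → Evidence                        -- [[e]]_p
  | hash : Evidence → Place → Evidence                        -- #{e}_p
  | seqc : Evidence → Evidence → Evidence                     -- e1 ;; e2
  | parc : Evidence → Evidence → Evidence                     -- e1 || e2
deriving DecidableEq, Repr

/-- The effect `d(e)` of a splitting specification on evidence. -/
def splitEv : Split → Evidence → Evidence
  | .plus, e => e
  | .minus, _ => .empty

/-- The Copland evidence semantics `E(t,p,φ,e)`. -/
def eval : Phrase → Place → List ℕ → Evidence → Evidence
  | .meas m q s, p, φ, e => .meas m q s p φ e
  | .copy, _, _, e => e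
  | .sign, p, _, e => .sig e p
  | .hash, p, _, e => .hash e p
  | .att q t, _, φ, e => eval t q (1 :: φ) e
  | .lseq t1 t2, p, φ, e => eval t2 p (2 :: φ) (eval t1 p (1 :: φ) e)
  | .bseq d1 d2 t1 t2, p, φ, e =>
      .seqc (eval t1 p (1 :: φ) (splitEv d1 e)) (eval t2 p (2 :: φ) (splitEv d2 e))
  | .bpar d1 d2 t1 t2, p, φ, e =>
      .parc (eval t1 p (1 :: φ) (splitEv d1 e)) (eval t2 p (2 :: φ) (splitEv d2 e))

/-- Join operators: sequential `<` or parallel `~`. -/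
inductive JoinOp where
  | seqJ
  | parJ
deriving DecidableEq, Repr

/-- Event labels. -/
inductive Label where
  | msp   : Place → Evidence → Label                    -- p : msp(e)
  | cpy   : Place → Evidence → Label                    -- p : cpy(e)
  | sig   : Place → Evidence → Label                    -- p : sig(e)
  | hsh   : Place → Evidence → Label                    -- p : hsh(e)
  | req   : Place → Place → Evidence → Label            -- p : req(q,e)
  | rpy   : Place → Place → Evidence → Label            -- p : rpy(q,e)
  | split : Place → Split → Split → Evidence → Label    -- p : split(d1,d2,e)
  | join  : Place → JoinOp → Evidence → Label           -- p : join(o,e)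
deriving DecidableEq, Repr

/-- The (sending) place `ϱ(v)`: the place before the colon in the label. -/
def Label.place : Label → Place
  | .msp p _ => p
  | .cpy p _ => p
  | .sig p _ => p
  | .hsh p _ => p
  | .req p _ _ => p
  | .rpy p _ _ => p
  | .split p _ _ _ => p
  | .join p _ _ => p

/-- The receiving place `ϱ'(v)`. -/
def Label.recvPlace : Label → Place
  | .req _ q _ => q
  | .rpy _ q _ => q
  | l => l.place

/-- The evidence `ε(v)`: the last argument of the label. -/
def Label.evid : Label → Evidence
  | .msp _ e => e
  | .cpy _ e => e
  | .sig _ e => e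
  | .hsh _ e => e
  | .req _ _ e => e
  | .rpy _ _ e => e
  | .split _ _ _ e => e
  | .join _ _ e => e

/-- A measurement event is one whose label has the form `p : msp(e)`. -/
def Label.IsMeas (l : Label) : Prop := ∃ p e, l = .msp p e

/-- A cross-place communication event is one with `ϱ(v) ≠ ϱ'(v)`. -/
def Label.IsCross (l : Label) : Prop := l.place ≠ l.recvPlace

/-- A data flow graph: events are the naturals `0, …, n-1`, with an input event,
an output event, flow edges, and a labeling. -/
structure DFG where
  n : ℕ
  vin : ℕ
  vout : ℕ
  edges : List (ℕ × ℕ)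
  label : ℕ → Label

namespace DFG

/-- Well-formedness of a data flow graph: events are in range, the flow
relation is acyclic, and there is no edge into the input event nor out of
the output event. -/
def WF (G : DFG) : Prop :=
  G.vin < G.n ∧ G.vout < G.n ∧
  (∀ pr ∈ G.edges, pr.1 < G.n ∧ pr.2 < G.n) ∧
  (∀ v, ¬ Relation.TransGen (fun a b => (a, b) ∈ G.edges) v v) ∧
  (∀ pr ∈ G.edges, pr.2 ≠ G.vin ∧ pr.1 ≠ G.vout)

/-- The single-event data flow graph. -/
def single (l : Label) : DFG :=
  { n := 1, vin := 0, vout := 0, edges := [], label := fun _ => l }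

/-- Before-copy composition: the second graph's events are renumbered after the
first's, and a flow edge links the output of the first to the input of the second. -/
def seqComp (G1 G2 : DFG) : DFG :=
  { n := G1.n + G2.n
    vin := G1.vin
    vout := G1.n + G2.vout
    edges := G1.edges ++ G2.edges.map (fun pr => (G1.n + pr.1, G1.n + pr.2)) ++
      [(G1.vout, G1.n + G2.vin)]
    label := fun i => if i < G1.n then G1.label i else G2.label (i - G1.n) }

/-- Branching composition: a split event, the two subgraphs (with a flow edge from
the split into the input of a subgraph exactly when the corresponding splitting
specification is `+`), and a join event receiving flow from both outputs. -/
def branch (sp jn : Label) (d1 d2 : Split) (G1 G2 : DFG) : DFG :=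
  { n := G1.n + G2.n + 2
    vin := 0
    vout := G1.n + G2.n + 1
    edges :=
      G1.edges.map (fun pr => (pr.1 + 1, pr.2 + 1)) ++
      G2.edges.map (fun pr => (pr.1 + 1 + G1.n, pr.2 + 1 + G1.n)) ++
      (if d1 = Split.plus then [(0, G1.vin + 1)] else []) ++
      (if d2 = Split.plus then [(0, G2.vin + 1 + G1.n)] else []) ++
      [(G1.vout + 1, G1.n + G2.n + 1), (G2.vout + 1 + G1.n, G1.n + G2.n + 1)]
    label := fun i =>
      if i = 0 then sp
      else if i < G1.n + 1 then G1.label (i - 1)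
      else if i < G1.n + G2.n + 1 then G2.label (i - 1 - G1.n)
      else jn }

end DFG

/-- The Copland data flow semantics `C(t,p,φ,e)`. -/
def sem : Phrase → Place → List ℕ → Evidence → DFG
  | .meas m q s, p, φ, e => .single (.msp p (.meas m q s p φ e))
  | .copy, p, _, e => .single (.cpy p e)
  | .sign, p, _, e => .single (.sig p (.sig e p))
  | .hash, p, _, e => .single (.hsh p (.hash e p))
  | .att q t, p, φ, e =>
      (DFG.single (.req p q e)).seqComp
        ((sem t q (1 :: φ) e).seqComp (.single (.rpy q p (eval t q (1 :: φ) e))))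
  | .lseq t1 t2, p, φ, e =>
      (sem t1 p (1 :: φ) e).seqComp (sem t2 p (2 :: φ) (eval t1 p (1 :: φ) e))
  | .bseq d1 d2 t1 t2, p, φ, e =>
      DFG.branch (.split p d1 d2 e)
        (.join p .seqJ (eval (.bseq d1 d2 t1 t2) p φ e)) d1 d2
        (sem t1 p (1 :: φ) (splitEv d1 e)) (sem t2 p (2 :: φ) (splitEv d2 e))
  | .bpar d1 d2 t1 t2, p, φ, e =>
      DFG.branch (.split p d1 d2 e)
        (.join p .parJ (eval (.bpar d1 d2 t1 t2) p φ e)) d1 d2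
        (sem t1 p (1 :: φ) (splitEv d1 e)) (sem t2 p (2 :: φ) (splitEv d2 e))

namespace DFG

/-- A path of a data flow graph: a nonempty sequence of events of the graph
successively related by flow edges. -/
def IsPath (G : DFG) (π : List ℕ) : Prop :=
  π ≠ [] ∧ (∀ v ∈ π, v < G.n) ∧ π.Chain' (fun a b => (a, b) ∈ G.edges)

/-- One step of the tamper set computation. -/
def tsStep (G : DFG) (s : Set Place) (v : ℕ) : Set Place :=
  match G.label v with
  | .sig p _ => {p} ∩ s
  | _ => s

/-- The tamper set `ts(π)` of a path: `ts(⟨v⟩)` is the set of all places if `v` is a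
measurement event and `∅` otherwise; `ts(π § v) = {p} ∩ ts(π)` if `ℓ(v) = p:sig(e)`,
and `ts(π § v) = ts(π)` otherwise. -/
def ts (G : DFG) (π : List ℕ) : Set Place :=
  match π with
  | [] => ∅
  | v :: rest =>
      rest.foldl (tsStep G)
        (match G.label v with
          | .msp _ _ => Set.univ
          | _ => ∅)

/-- A path is `p`-signing iff every signature event on it occurs at `p`. -/
def Signing (G : DFG) (π : List ℕ) (p : Place) : Prop :=
  ∀ v ∈ π, ∀ q e, G.label v = .sig q e → q = p

/-- A path `π = ⟨v, …, v'⟩` permits tampering (at `v'` with the evidence from `v`)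
iff (1) `v` is a measurement event, (2) the length of `π` exceeds 1, and
(3) `π` is `ϱ(v')`-signing or `ϱ'(v')`-signing. -/
def PermitsTamper (G : DFG) (π : List ℕ) : Prop :=
  (∀ v, π.head? = some v → (G.label v).IsMeas) ∧
  1 < π.length ∧
  (∀ v', π.getLast? = some v' →
    G.Signing π (G.label v').place ∨ G.Signing π (G.label v').recvPlace)

/-- A path `⟨v1,…,vn⟩` is local to place `p` iff every interior event has both
sending and receiving place `p`, and each endpoint has sending or receiving place `p`. -/
def LocalTo (G : DFG) (π : List ℕ) (p : Place) : Prop :=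
  (∀ i v, 0 < i → i + 1 < π.length → π[i]? = some v →
      (G.label v).place = p ∧ (G.label v).recvPlace = p) ∧
  (∀ v, π.head? = some v → (G.label v).place = p ∨ (G.label v).recvPlace = p) ∧
  (∀ v, π.getLast? = some v → (G.label v).place = p ∨ (G.label v).recvPlace = p)

/-- `π` is a path of `G` from `v` to `v'`. -/
def PathBetween (G : DFG) (v v' : ℕ) (π : List ℕ) : Prop :=
  G.IsPath π ∧ π.head? = some v ∧ π.getLast? = some v'

/-- A set `S` of events of `G` is a tamper strategy for `v` iff every path from `v`
to the output event of `G` contains an event `v' ∈ S` such that the prefix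
`⟨v, …, v'⟩` of the path permits tampering. -/
def TamperStrategy (G : DFG) (S : Set ℕ) (v : ℕ) : Prop :=
  (∀ w ∈ S, w < G.n) ∧
  ∀ π, G.PathBetween v G.vout π →
    ∃ v' ∈ S, ∃ π', π' <+: π ∧ π'.getLast? = some v' ∧ G.PermitsTamper π'

/-- `S` is a minimal tamper strategy for `v` iff it is a tamper strategy for `v` and
every tamper strategy for `v` included in `S` equals `S`. -/
def MinimalTamperStrategy (G : DFG) (S : Set ℕ) (v : ℕ) : Prop :=
  G.TamperStrategy S v ∧ ∀ S', G.TamperStrategy S' v → S' ⊆ S → S' = S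

/-- A path `π = ⟨v1,…,vn⟩` is protected iff either `v1` is not a measurement event,
or for every `1 < i ≤ n`, if `vi` is a cross-place communication event then
`ts(⟨v1,…,vi⟩) ⊆ {ϱ(vi)}`. -/
def ProtectedPath (G : DFG) (π : List ℕ) : Prop :=
  (∀ v, π.head? = some v → ¬ (G.label v).IsMeas) ∨
  (∀ i v, 0 < i → i < π.length → π[i]? = some v → (G.label v).IsCross →
      G.ts (π.take (i + 1)) ⊆ {(G.label v).place})

/-- A data flow graph is protected iff all of its paths are protected. -/
def Protected (G : DFG) : Prop :=
  ∀ π, G.IsPath π → G.ProtectedPath π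

end DFG

/-- The tamper places function `τ` on evidence. -/
def tau : Evidence → Set Place
  | .empty => ∅
  | .meas _ _ _ _ _ _ => Set.univ
  | .hash e _ => tau e
  | .sig e p => {p} ∩ tau e
  | .seqc e1 e2 => tau e1 ∪ tau e2
  | .parc e1 e2 => tau e1 ∪ tau e2

open scoped Classical in
/-- The Evidence Protection Program `epp(t,p,e)`. -/
noncomputable def epp : Phrase → Place → Evidence → Phrase
  | .meas m q s, _, _ => .meas m q s
  | .copy, _, _ => .copy
  | .sign, _, _ => .sign
  | .hash, _, _ => .hash
  | .lseq t1 t2, p, e =>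
      .lseq (epp t1 p e) (epp t2 p (eval (epp t1 p e) p [] e))
  | .att q t, p, e =>
      if q = p then .att q (epp t p e)
      else if tau e ⊆ {p} then
        if tau (eval (epp t q e) q [] e) ⊆ {q} then
          .att q (epp t q e)
        else
          .att q (.lseq (epp t q e) .sign)
      else
        if tau (eval (epp t q (.sig e p)) q [] (.sig e p)) ⊆ {q} then
          .lseq .sign (.att q (epp t q (.sig e p)))
        else
          .lseq .sign (.att q (.lseq (epp t q (.sig e p)) .sign))
  | .bseq d1 d2 t1 t2, p, e =>
      .bseq d1 d2 (epp t1 p (splitEv d1 e)) (epp t2 p (splitEv d2 e))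
  | .bpar d1 d2 t1 t2, p, e =>
      .bpar d1 d2 (epp t1 p (splitEv d1 e)) (epp t2 p (splitEv d2 e))

end Copland
namespace Copland

namespace DFG

/-- A graph is coherent from `p` to `q` if its events are in range, its input event is located at
`p`, its output event is received at `q`, and every flow edge leads to an event located at the
receiving place of its source. -/
structure Coherent (G : DFG) (p q : Place) : Prop where
  vin_lt : G.vin < G.n
  vout_lt : G.vout < G.n
  edges_lt : ∀ a b, (a, b) ∈ G.edges → a < G.n ∧ b < G.n
  place_vin : (G.label G.vin).place = p
  recvPlace_vout : (G.label G.vout).recvPlace = q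
  recvPlace_eq_place : ∀ a b, (a, b) ∈ G.edges → (G.label a).recvPlace = (G.label b).place

theorem coherent_single {l : Label} {p q : Place} (h : l.place = p) (h' : l.recvPlace = q) :
    (single l).Coherent p q := by
  constructor <;> simp [single, h, h']

theorem seqComp_label_left {G₁ G₂ : DFG} {i : ℕ} (h : i < G₁.n) :
    (G₁.seqComp G₂).label i = G₁.label i := by
  simp [seqComp, h]

theorem seqComp_label_right (G₁ G₂ : DFG) (i : ℕ) :
    (G₁.seqComp G₂).label (G₁.n + i) = G₂.label i := by
  simp [seqComp]

theorem mem_seqComp_edges {G₁ G₂ : DFG} {a b : ℕ} (h : (a, b) ∈ (G₁.seqComp G₂).edges) :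
    (a, b) ∈ G₁.edges ∨
      (∃ c d, (c, d) ∈ G₂.edges ∧ a = G₁.n + c ∧ b = G₁.n + d) ∨
      (a = G₁.vout ∧ b = G₁.n + G₂.vin) := by
  simp only [seqComp, List.mem_append, List.mem_map, List.mem_singleton, Prod.mk.injEq,
    Prod.exists] at h
  grind

theorem Coherent.seqComp {G₁ G₂ : DFG} {p q r : Place} (h₁ : G₁.Coherent p q)
    (h₂ : G₂.Coherent q r) : (G₁.seqComp G₂).Coherent p r where
  vin_lt := Nat.lt_add_right _ h₁.vin_lt
  vout_lt := Nat.add_lt_add_left h₂.vout_lt _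
  edges_lt a b hab := by
    change a < G₁.n + G₂.n ∧ b < G₁.n + G₂.n
    have := h₁.vout_lt
    have := h₂.vin_lt
    rcases mem_seqComp_edges hab with h | ⟨c, d, h, rfl, rfl⟩ | ⟨rfl, rfl⟩
    · have := h₁.edges_lt _ _ h
      omega
    · have := h₂.edges_lt _ _ h
      omega
    · omega
  place_vin := (congrArg _ (seqComp_label_left h₁.vin_lt)).trans h₁.place_vin
  recvPlace_vout := (congrArg _ (seqComp_label_right ..)).trans h₂.recvPlace_vout
  recvPlace_eq_place a b hab := by
    rcases mem_seqComp_edges hab with h | ⟨c, d, h, rfl, rfl⟩ | ⟨rfl, rfl⟩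
    · rw [seqComp_label_left (h₁.edges_lt _ _ h).1, seqComp_label_left (h₁.edges_lt _ _ h).2]
      exact h₁.recvPlace_eq_place _ _ h
    · rw [seqComp_label_right, seqComp_label_right]
      exact h₂.recvPlace_eq_place _ _ h
    · rw [seqComp_label_left h₁.vout_lt, seqComp_label_right, h₁.recvPlace_vout, h₂.place_vin]

theorem branch_label_left {sp jn : Label} {d₁ d₂ : Split} {G₁ G₂ : DFG} {i : ℕ} (h : i < G₁.n) :
    (branch sp jn d₁ d₂ G₁ G₂).label (i + 1) = G₁.label i := by
  simp [branch, h]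

theorem branch_label_right {sp jn : Label} {d₁ d₂ : Split} {G₁ G₂ : DFG} {i : ℕ} (h : i < G₂.n) :
    (branch sp jn d₁ d₂ G₁ G₂).label (i + 1 + G₁.n) = G₂.label i := by
  have h₀ : ¬ i + 1 + G₁.n = 0 := by omega
  have h₁ : ¬ i + 1 + G₁.n < G₁.n + 1 := by omega
  have h₂ : i + 1 + G₁.n < G₁.n + G₂.n + 1 := by omega
  have h₃ : i + 1 + G₁.n - 1 - G₁.n = i := by omega
  simp only [branch, h₀, h₁, h₂, h₃, if_true, if_false]

theorem branch_label_vout (sp jn : Label) (d₁ d₂ : Split) (G₁ G₂ : DFG) :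
    (branch sp jn d₁ d₂ G₁ G₂).label (G₁.n + G₂.n + 1) = jn := by
  simp [branch]

theorem mem_branch_edges {sp jn : Label} {d₁ d₂ : Split} {G₁ G₂ : DFG} {a b : ℕ}
    (h : (a, b) ∈ (branch sp jn d₁ d₂ G₁ G₂).edges) :
    (∃ c d, (c, d) ∈ G₁.edges ∧ a = c + 1 ∧ b = d + 1) ∨
      (∃ c d, (c, d) ∈ G₂.edges ∧ a = c + 1 + G₁.n ∧ b = d + 1 + G₁.n) ∨
      (a = 0 ∧ b = G₁.vin + 1) ∨ (a = 0 ∧ b = G₂.vin + 1 + G₁.n) ∨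
      (a = G₁.vout + 1 ∧ b = G₁.n + G₂.n + 1) ∨
      (a = G₂.vout + 1 + G₁.n ∧ b = G₁.n + G₂.n + 1) := by
  simp only [branch, List.mem_append, List.mem_map, Prod.exists, Prod.mk.injEq, List.mem_cons,
    List.not_mem_nil, or_false] at h
  grind

theorem Coherent.branch {sp jn : Label} {d₁ d₂ : Split} {G₁ G₂ : DFG} {p : Place}
    (h₁ : G₁.Coherent p p) (h₂ : G₂.Coherent p p)
    (hsp : sp.place = p) (hsp' : sp.recvPlace = p) (hjn : jn.place = p) (hjn' : jn.recvPlace = p) :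
    (branch sp jn d₁ d₂ G₁ G₂).Coherent p p where
  vin_lt := Nat.succ_pos _
  vout_lt := Nat.lt_succ_self _
  edges_lt a b hab := by
    change a < G₁.n + G₂.n + 2 ∧ b < G₁.n + G₂.n + 2
    have := h₁.vin_lt
    have := h₁.vout_lt
    have := h₂.vin_lt
    have := h₂.vout_lt
    rcases mem_branch_edges hab with ⟨c, d, h, rfl, rfl⟩ | ⟨c, d, h, rfl, rfl⟩ | h
    · have := h₁.edges_lt _ _ h
      omega
    · have := h₂.edges_lt _ _ h
      omega
    · omega
  place_vin := hsp
  recvPlace_vout := (congrArg _ (branch_label_vout ..)).trans hjn'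
  recvPlace_eq_place a b hab := by
    rcases mem_branch_edges hab with ⟨c, d, h, rfl, rfl⟩ | ⟨c, d, h, rfl, rfl⟩ |
      ⟨rfl, rfl⟩ | ⟨rfl, rfl⟩ | ⟨rfl, rfl⟩ | ⟨rfl, rfl⟩
    · rw [branch_label_left (h₁.edges_lt _ _ h).1, branch_label_left (h₁.edges_lt _ _ h).2]
      exact h₁.recvPlace_eq_place _ _ h
    · rw [branch_label_right (h₂.edges_lt _ _ h).1, branch_label_right (h₂.edges_lt _ _ h).2]
      exact h₂.recvPlace_eq_place _ _ h
    · rw [branch_label_left h₁.vin_lt, h₁.place_vin]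
      exact hsp'
    · rw [branch_label_right h₂.vin_lt, h₂.place_vin]
      exact hsp'
    · rw [branch_label_left h₁.vout_lt, branch_label_vout, h₁.recvPlace_vout, hjn]
    · rw [branch_label_right h₂.vout_lt, branch_label_vout, h₂.recvPlace_vout, hjn]

/-- A pair of events is a local path if the second is located at the receiving place of the first. -/
theorem localTo_pair {G : DFG} {v w : ℕ} (h : (G.label v).recvPlace = (G.label w).place) :
    G.LocalTo [v, w] (G.label w).place := by
  refine ⟨fun i _ hi hi' => ?_, ?_, ?_⟩
  · simp only [List.length_cons, List.length_nil] at hi'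
    omega
  · simp [h]
  · simp

theorem permitsTamper_pair {G : DFG} {v w : ℕ} (hm : (G.label v).IsMeas) :
    G.PermitsTamper [v, w] := by
  refine ⟨by simpa using hm, by simp, ?_⟩
  intro x hx
  obtain rfl : w = x := by simpa using hx
  left
  intro u hu q e hq
  obtain ⟨q', e', hm⟩ := hm
  rcases List.mem_pair.mp hu with rfl | rfl
  · simp [hm] at hq
  · simp [hq, Label.place]

end DFG

theorem coherent_sem (t : Phrase) (p : Place) (φ : List ℕ) (e : Evidence) :
    (sem t p φ e).Coherent p p := by
  induction t generalizing p φ e with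
  | meas | copy | sign | hash => exact DFG.coherent_single rfl rfl
  | att q t ih =>
    exact (DFG.coherent_single rfl rfl).seqComp
      ((ih q _ _).seqComp (DFG.coherent_single rfl rfl))
  | lseq t₁ t₂ ih₁ ih₂ => exact (ih₁ _ _ _).seqComp (ih₂ _ _ _)
  | bseq d₁ d₂ t₁ t₂ ih₁ ih₂ | bpar d₁ d₂ t₁ t₂ ih₁ ih₂ =>
    exact (ih₁ _ _ _).branch (ih₂ _ _ _) rfl rfl rfl rfl

end Copland

open Copland in
/-- Every path from a measurement event `v ≠ ⊤(D)` to the output of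
`D = C(t,p,φ,e)` has a prefix of length greater than one that is local to
some place and permits tampering. -/
theorem local_tamper_permitting_prefix (t : Phrase) (p : Place) (φ : List ℕ)
    (e : Evidence) (v : ℕ) (π : List ℕ)
    (hv : v < (sem t p φ e).n) (hm : ((sem t p φ e).label v).IsMeas)
    (hne : v ≠ (sem t p φ e).vout)
    (hπ : (sem t p φ e).PathBetween v (sem t p φ e).vout π) :
    ∃ π', π' <+: π ∧ 1 < π'.length ∧
      (∃ q : Place, (sem t p φ e).LocalTo π' q) ∧
      (sem t p φ e).PermitsTamper π' := by
  obtain ⟨⟨-, -, hchain⟩, hhead, hlast⟩ := hπ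
  match π with
  | [] => simp at hhead
  | [a] => simp_all
  | a :: b :: l =>
    obtain rfl : a = v := by simpa using hhead
    have hab := (List.isChain_cons_cons.mp hchain).1
    exact ⟨[a, b], ⟨l, rfl⟩, by simp,
      ⟨_, DFG.localTo_pair ((coherent_sem t p φ e).recvPlace_eq_place _ _ hab)⟩,
      DFG.permitsTamper_pair hm⟩
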